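/- In the Melikian algebra M over a field of characteristic 5, [M_{≥1}, M_{≥1}] = M_{≥3} + F·(x₁D̃₁ + x₂D̃₂), where M_{≥d} denotes the sum of the graded pieces of degree at least d. -/

import Mathlib

open scoped BigOperators

namespace Melikian

/-- Index set for monomials in the truncated polynomial algebra
`A(2) = F[x₁,x₂]/(x₁⁵,x₂⁵)`. -/
abbrev Idx : Type := Fin 5 × Fin 5

/-- The truncated polynomial algebra `A(2)`, as functions on monomial exponents. -/
abbrev A (F : Type*) [Field F] : Type _ := Idx → F

variable {F : Type*} [Field F]

/-- The monomial `x^b = x₁^{b₁} x₂^{b₂}`. -/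
def X (b : Idx) : A F := fun a => if a = b then 1 else 0

/-- Truncated multiplication of `A(2)`. -/
def mulA (f g : A F) : A F := fun a =>
  ∑ b : Idx, ∑ c : Idx,
    if b.1.val + c.1.val = a.1.val ∧ b.2.val + c.2.val = a.2.val then f b * g c else 0

/-- Partial derivative `∂/∂x₁` on `A(2)`. -/
def d1 (f : A F) : A F := fun a =>
  if h : a.1.val + 1 < 5 then ((a.1.val + 1 : ℕ) : F) * f (⟨a.1.val + 1, h⟩, a.2) else 0

/-- Partial derivative `∂/∂x₂` on `A(2)`. -/
def d2 (f : A F) : A F := fun a =>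
  if h : a.2.val + 1 < 5 then ((a.2.val + 1 : ℕ) : F) * f (a.1, ⟨a.2.val + 1, h⟩) else 0

/-- The Witt–Jacobson algebra `W(2)` as a free `A(2)`-module with basis `D₁, D₂`:
an element `(f₁, f₂)` stands for `f₁D₁ + f₂D₂`. -/
abbrev W (F : Type*) [Field F] : Type _ := A F × A F

/-- Action of a derivation `D = f₁D₁+f₂D₂ ∈ W(2)` on `A(2)`. -/
def Dw (D : W F) (g : A F) : A F := mulA D.1 (d1 g) + mulA D.2 (d2 g)

/-- Divergence `div(f₁D₁+f₂D₂) = D₁(f₁) + D₂(f₂)`. -/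
def divW (D : W F) : A F := d1 D.1 + d2 D.2

/-- The usual bracket of `W(2)`. -/
def brW (D E : W F) : W F := (Dw D E.1 - Dw E D.1, Dw D E.2 - Dw E D.2)

/-- Multiplication of an element of `W(2)` by a truncated polynomial. -/
def smulA (f : A F) (D : W F) : W F := (mulA f D.1, mulA f D.2)

/-- The Melikian algebra `M = A(2) ⊕ W(2) ⊕ W(2)~` as an `F`-vector space. -/
abbrev Mel (F : Type*) [Field F] : Type _ := A F × W F × W F

/-- Inclusion of `A(2)` into `M`. -/
def ιA (f : A F) : Mel F := (f, 0, 0)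

/-- Inclusion of `W(2)` into `M`. -/
def ιW (D : W F) : Mel F := (0, D, 0)

/-- Inclusion of the second copy `W(2)~` into `M`, `D ↦ D̃`. -/
def ιT (D : W F) : Mel F := (0, 0, D)

/-- The Melikian bracket on `M = A(2) ⊕ W(2) ⊕ W(2)~`, defined by the rules
`[D,Ẽ] = [D,E]~ + 2 div(D) Ẽ`, `[D,f] = D(f) − 2 div(D) f`,
`[f₁D̃₁+f₂D̃₂, g₁D̃₁+g₂D̃₂] = f₁g₂ − f₂g₁`, `[f,Ẽ] = fE`,
`[f,g] = 2(gD₂(f) − fD₂(g))D̃₁ + 2(fD₁(g) − gD₁(f))D̃₂`,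
extended bilinearly and antisymmetrically (with the standard bracket on `W(2)`). -/
def brM (u v : Mel F) : Mel F :=
  ( (Dw u.2.1 v.1 - (2 : F) • mulA (divW u.2.1) v.1)
      - (Dw v.2.1 u.1 - (2 : F) • mulA (divW v.2.1) u.1)
      + (mulA u.2.2.1 v.2.2.2 - mulA u.2.2.2 v.2.2.1)
  , brW u.2.1 v.2.1 + smulA u.1 v.2.2 - smulA v.1 u.2.2
  , (brW u.2.1 v.2.2 + (2 : F) • smulA (divW u.2.1) v.2.2)
      - (brW v.2.1 u.2.2 + (2 : F) • smulA (divW v.2.1) u.2.2)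
      + ((2 : F) • (mulA v.1 (d2 u.1) - mulA u.1 (d2 v.1)),
         (2 : F) • (mulA u.1 (d1 v.1) - mulA v.1 (d1 u.1))) )

/-- `x^b D_i` as an element of `W(2)` (`i = 0` stands for `D₁`, `i = 1` for `D₂`). -/
def wOf (i : Fin 2) (b : Idx) : W F := if i = 0 then (X b, 0) else (0, X b)

/-- The element `x₁D₁ ∈ M`. -/
def x1D1 : Mel F := ιW (X (1, 0), 0)

/-- The element `x₂D₂ ∈ M`. -/
def x2D2 : Mel F := ιW (0, X (0, 1))

/-- The element `1 ∈ A(2) ⊂ M`. -/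
def oneM : Mel F := ιA (X (0, 0))

/-- The element `D_{i+1} ∈ W(2) ⊂ M`. -/
def DD (i : Fin 2) : Mel F := ιW (wOf i (0, 0))

/-- The element `D̃_{i+1} ∈ W(2)~ ⊂ M`. -/
def TT (i : Fin 2) : Mel F := ιT (wOf i (0, 0))

/-- Total degree of a monomial exponent. -/
def degA (b : Idx) : ℤ := (b.1.val : ℤ) + (b.2.val : ℤ)

/-- The degree-`d` piece `M_d` of the `ℤ`-grading of the Melikian algebra:
`deg_M(f) = 3 deg(f) − 2` on `A(2)`, `deg_M(x^bD_i) = 3(|b|−1)` on `W(2)`, and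
`deg_M(x^bD̃_i) = 3(|b|−1)+2` on `W(2)~`. -/
def Md (d : ℤ) : Submodule F (Mel F) :=
  Submodule.span F
    ( {m | ∃ b : Idx, m = ιA (X b) ∧ d = 3 * degA b - 2}
      ∪ {m | ∃ b : Idx, ∃ i : Fin 2, m = ιW (wOf i b) ∧ d = 3 * (degA b - 1)}
      ∪ {m | ∃ b : Idx, ∃ i : Fin 2, m = ιT (wOf i b) ∧ d = 3 * (degA b - 1) + 2} )

/-- The part `M_{≥ d}` of the Melikian algebra. -/
def Mge (d : ℤ) : Submodule F (Mel F) := ⨆ e : ℤ, ⨆ _ : d ≤ e, (Md e : Submodule F (Mel F))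

/-- The squaring `Sq(γ)(x,y) = Σ_{k=1}^{4} [γ^k(x), γ^{5−k}(y)] / (k!(5−k)!)`
of an operator `γ` on the Melikian algebra (characteristic 5). -/
def melSq (γ : Mel F → Mel F) (x y : Mel F) : Mel F :=
  ∑ k ∈ Finset.Icc 1 4,
    ((Nat.factorial k * Nat.factorial (5 - k) : ℕ) : F)⁻¹ • brM (γ^[k] x) (γ^[5 - k] y)

/-- The Chevalley–Eilenberg coboundary of a linear 1-cochain of `M` with values in the
adjoint representation. -/
def cob (g : Mel F →ₗ[F] Mel F) (x y : Mel F) : Mel F :=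
  brM x (g y) - brM y (g x) - g (brM x y)


/-! ### Coordinate description of the filtration -/

/-- Elements whose coordinates along all basis vectors of degree below `d` vanish. -/
def coordGe (d : ℤ) : Submodule F (Mel F) where
  carrier := {u | ∀ b : Idx, (3 * degA b - 2 < d → u.1 b = 0) ∧
    (3 * (degA b - 1) < d → u.2.1.1 b = 0 ∧ u.2.1.2 b = 0) ∧
    (3 * (degA b - 1) + 2 < d → u.2.2.1 b = 0 ∧ u.2.2.2 b = 0)}
  add_mem' := fun {u v} hu hv b =>
    ⟨fun h => by simp [(hu b).1 h, (hv b).1 h],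
      fun h => by simp [(hu b).2.1 h, (hv b).2.1 h],
      fun h => by simp [(hu b).2.2 h, (hv b).2.2 h]⟩
  zero_mem' := fun b => by simp
  smul_mem' := fun c u hu b =>
    ⟨fun h => by simp [(hu b).1 h], fun h => by simp [(hu b).2.1 h],
      fun h => by simp [(hu b).2.2 h]⟩

theorem Md_le_Mge {d e : ℤ} (h : d ≤ e) : (Md e : Submodule F (Mel F)) ≤ Mge d :=
  le_iSup₂_of_le e h le_rfl

theorem ιA_mem_Mge {d : ℤ} {b : Idx} (h : d ≤ 3 * degA b - 2) :
    ιA (X b) ∈ (Mge d : Submodule F (Mel F)) :=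
  Md_le_Mge h (Submodule.subset_span (Or.inl (Or.inl ⟨b, rfl, rfl⟩)))

theorem ιW_mem_Mge {d : ℤ} {b : Idx} (i : Fin 2) (h : d ≤ 3 * (degA b - 1)) :
    ιW (wOf i b) ∈ (Mge d : Submodule F (Mel F)) :=
  Md_le_Mge h (Submodule.subset_span (Or.inl (Or.inr ⟨b, i, rfl, rfl⟩)))

theorem ιT_mem_Mge {d : ℤ} {b : Idx} (i : Fin 2) (h : d ≤ 3 * (degA b - 1) + 2) :
    ιT (wOf i b) ∈ (Mge d : Submodule F (Mel F)) :=
  Md_le_Mge h (Submodule.subset_span (Or.inr ⟨b, i, rfl, rfl⟩))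

/-- To bound `M_{≥ d}` by a submodule it suffices to check the basis vectors. -/
theorem Mge_le {d : ℤ} {N : Submodule F (Mel F)}
    (hA : ∀ b, d ≤ 3 * degA b - 2 → ιA (X b) ∈ N)
    (hW : ∀ b i, d ≤ 3 * (degA b - 1) → ιW (wOf i b) ∈ N)
    (hT : ∀ b i, d ≤ 3 * (degA b - 1) + 2 → ιT (wOf i b) ∈ N) : Mge d ≤ N := by
  refine iSup₂_le fun e he => Submodule.span_le.2 ?_
  rintro m ((⟨b, rfl, rfl⟩ | ⟨b, i, rfl, rfl⟩) | ⟨b, i, rfl, rfl⟩)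
  · exact hA b he
  · exact hW b i he
  · exact hT b i he

theorem X_apply_of_degA_ne {a b : Idx} (h : degA a ≠ degA b) : (X b : A F) a = 0 :=
  if_neg fun hab : a = b => h (hab ▸ rfl)

theorem Mge_le_coordGe (d : ℤ) : (Mge d : Submodule F (Mel F)) ≤ coordGe d := by
  refine Mge_le (fun b hb a => ?_) (fun b i hb a => ?_) (fun b i hb a => ?_)
  · refine ⟨fun h => X_apply_of_degA_ne (by omega), ?_, ?_⟩ <;> simp [ιA]
  · refine ⟨by simp [ιW], fun h => ?_, by simp [ιW]⟩
    have := X_apply_of_degA_ne (F := F) (a := a) (b := b) (by omega)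
    fin_cases i <;> simp [ιW, wOf, this]
  · refine ⟨by simp [ιT], by simp [ιT], fun h => ?_⟩
    have := X_apply_of_degA_ne (F := F) (a := a) (b := b) (by omega)
    fin_cases i <;> simp [ιT, wOf, this]

theorem eq_sum_basis (u : Mel F) :
    u = ∑ b, (u.1 b • ιA (X b) + u.2.1.1 b • ιW (wOf 0 b) + u.2.1.2 b • ιW (wOf 1 b)
      + u.2.2.1 b • ιT (wOf 0 b) + u.2.2.2 b • ιT (wOf 1 b)) := by
  ext a <;>
    simp [Prod.fst_sum, Prod.snd_sum, Finset.sum_apply, ιA, ιW, ιT, wOf, X]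

theorem coordGe_le_Mge (d : ℤ) : (coordGe d : Submodule F (Mel F)) ≤ Mge d := by
  intro u hu
  rw [eq_sum_basis u]
  refine Submodule.sum_mem _ fun b _ => ?_
  obtain ⟨hA, hW, hT⟩ := hu b
  have key : ∀ (c : F) (m : Mel F) (e : ℤ), (e < d → c = 0) → (d ≤ e → m ∈ Mge d) →
      c • m ∈ Mge d := by
    intro c m e hc hm
    rcases lt_or_ge e d with h | h
    · simp [hc h]
    · exact Submodule.smul_mem _ _ (hm h)
  refine add_mem (add_mem (add_mem (add_mem ?_ ?_) ?_) ?_) ?_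
  · exact key _ _ _ hA ιA_mem_Mge
  · exact key _ _ _ (fun h => (hW h).1) (ιW_mem_Mge 0)
  · exact key _ _ _ (fun h => (hW h).2) (ιW_mem_Mge 1)
  · exact key _ _ _ (fun h => (hT h).1) (ιT_mem_Mge 0)
  · exact key _ _ _ (fun h => (hT h).2) (ιT_mem_Mge 1)

/-! ### Truncated polynomial arithmetic -/

theorem mulA_comm (f g : A F) : mulA f g = mulA g f := by
  funext a
  rw [mulA, mulA, Finset.sum_comm]
  simp only [add_comm, mul_comm]

@[simp] theorem mulA_zero (f : A F) : mulA f 0 = 0 := by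
  funext a; simp [mulA]

@[simp] theorem zero_mulA (f : A F) : mulA 0 f = 0 := by
  funext a; simp [mulA]

theorem mulA_smul (c : F) (f g : A F) : mulA f (c • g) = c • mulA f g := by
  funext a
  simp [mulA, Finset.mul_sum, mul_left_comm]

@[simp] theorem d1_zero : d1 (0 : A F) = 0 := by
  funext a; simp [d1]

@[simp] theorem d2_zero : d2 (0 : A F) = 0 := by
  funext a; simp [d2]

theorem mulA_X {b c a : Idx} (h₁ : b.1.val + c.1.val = a.1.val)
    (h₂ : b.2.val + c.2.val = a.2.val) : mulA (X b) (X c) = (X a : A F) := by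
  funext e
  rw [mulA, Finset.sum_eq_single b _ (by simp), Finset.sum_eq_single c _ (by simp)]
  · simp [X, h₁, h₂, Prod.ext_iff, Fin.ext_iff, eq_comm]
  · intro c' _ hc
    simp [X, hc]
  · intro b' _ hb
    simp [X, hb]

theorem d1_X_of_eq_zero {b : Idx} (h : b.1.val = 0) : d1 (X b : A F) = 0 := by
  funext e
  have : ∀ h', ((⟨e.1.val + 1, h'⟩, e.2) : Idx) ≠ b := by
    rintro h' rfl
    simp at h
  simp [d1, X, this]

theorem d2_X_of_eq_zero {b : Idx} (h : b.2.val = 0) : d2 (X b : A F) = 0 := by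
  funext e
  have : ∀ h', ((e.1, ⟨e.2.val + 1, h'⟩) : Idx) ≠ b := by
    rintro h' rfl
    simp at h
  simp [d2, X, this]

theorem d1_X {b a : Idx} (h₁ : b.1.val = a.1.val + 1) (h₂ : b.2 = a.2) :
    d1 (X b : A F) = (b.1.val : F) • X a := by
  funext e
  by_cases he : e = a
  · subst he
    have : e.1.val + 1 < 5 := h₁ ▸ b.1.isLt
    have hb : b = (⟨e.1.val + 1, this⟩, e.2) := Prod.ext (Fin.ext h₁) h₂
    simp [d1, X, hb, this]
  · have : ∀ h', ((⟨e.1.val + 1, h'⟩, e.2) : Idx) ≠ b := by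
      rintro h' rfl
      exact he (Prod.ext (Fin.ext (by simpa using h₁)) h₂)
    simp [d1, X, this, he]

theorem d2_X {b a : Idx} (h₁ : b.1 = a.1) (h₂ : b.2.val = a.2.val + 1) :
    d2 (X b : A F) = (b.2.val : F) • X a := by
  funext e
  by_cases he : e = a
  · subst he
    have : e.2.val + 1 < 5 := h₂ ▸ b.2.isLt
    have hb : b = (e.1, ⟨e.2.val + 1, this⟩) := Prod.ext h₁ (Fin.ext h₂)
    simp [d2, X, hb, this]
  · have : ∀ h', ((e.1, ⟨e.2.val + 1, h'⟩) : Idx) ≠ b := by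
      rintro h' rfl
      exact he (Prod.ext h₁ (Fin.ext (by simpa using h₂)))
    simp [d2, X, this, he]

theorem mulA_X_d1_X {b c a : Idx} (h₁ : b.1.val + c.1.val = a.1.val + 1)
    (h₂ : b.2.val + c.2.val = a.2.val) :
    mulA (X b) (d1 (X c)) = (c.1.val : F) • (X a : A F) := by
  rcases Nat.eq_zero_or_pos c.1.val with h | h
  · simp [d1_X_of_eq_zero h, h]
  · rw [d1_X (F := F) (b := c) (a := (⟨c.1.val - 1, by omega⟩, c.2)) (by simp only; omega) rfl,
      mulA_smul]
    congr 1
    exact mulA_X (by simp only; omega) h₂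

theorem mulA_X_d2_X {b c a : Idx} (h₁ : b.1.val + c.1.val = a.1.val)
    (h₂ : b.2.val + c.2.val = a.2.val + 1) :
    mulA (X b) (d2 (X c)) = (c.2.val : F) • (X a : A F) := by
  rcases Nat.eq_zero_or_pos c.2.val with h | h
  · simp [d2_X_of_eq_zero h, h]
  · rw [d2_X (F := F) (b := c) (a := (c.1, ⟨c.2.val - 1, by omega⟩)) rfl (by simp only; omega),
      mulA_smul]
    congr 1
    exact mulA_X h₁ (by simp only; omega)

/-- A monomial of degree at least two splits off a linear factor. -/
theorem exists_X_eq_mulA {b : Idx} (hb : 2 ≤ degA b) :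
    ∃ s r : Idx, degA s = 1 ∧ 1 ≤ degA r ∧ mulA (X s) (X r) = (X b : A F) := by
  unfold degA at *
  rcases Nat.eq_zero_or_pos b.1.val with h | h
  · exact ⟨(0, 1), (b.1, ⟨b.2.val - 1, by omega⟩), by simp, by simp; omega,
      mulA_X (by simp) (by simp; omega)⟩
  · exact ⟨(1, 0), (⟨b.1.val - 1, by omega⟩, b.2), by simp, by simp; omega,
      mulA_X (by simp; omega) (by simp)⟩

/-! ### Brackets of homogeneous components -/

theorem brM_ιA_ιT (f : A F) (E : W F) : brM (ιA f) (ιT E) = ιW (smulA f E) := by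
  ext a <;> simp [brM, ιA, ιT, ιW, brW, Dw, divW, smulA]

theorem brM_ιT_ιT (D E : W F) :
    brM (ιT D) (ιT E) = ιA (mulA D.1 E.2 - mulA D.2 E.1) := by
  ext a <;> simp [brM, ιA, ιT, brW, Dw, divW, smulA]

theorem brM_ιW_ιT (D E : W F) :
    brM (ιW D) (ιT E) = ιT (brW D E + (2 : F) • smulA (divW D) E) := by
  ext a <;> simp [brM, ιT, ιW, brW, Dw, divW, smulA]

theorem brM_ιA_ιA (f g : A F) :
    brM (ιA f) (ιA g) = ιT ((2 : F) • (mulA g (d2 f) - mulA f (d2 g)),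
      (2 : F) • (mulA f (d1 g) - mulA g (d1 f))) := by
  ext a <;> simp [brM, ιA, ιT, brW, Dw, divW, smulA]

/-! ### The commutator contains `M_{≥ 3}` -/

/-- The span of all brackets of elements of `M_{≥ 1}`. -/
def commGeOne (F : Type*) [Field F] : Submodule F (Mel F) :=
  Submodule.span F {m : Mel F | ∃ x ∈ (Mge 1 : Submodule F (Mel F)),
    ∃ y ∈ (Mge 1 : Submodule F (Mel F)), m = brM x y}

theorem brM_mem_commGeOne {x y : Mel F} (hx : x ∈ (Mge 1 : Submodule F (Mel F)))
    (hy : y ∈ (Mge 1 : Submodule F (Mel F))) : brM x y ∈ commGeOne F :=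
  Submodule.subset_span ⟨x, hx, y, hy, rfl⟩

theorem ιA_X_mem_commGeOne {b : Idx} (hb : 2 ≤ degA b) : ιA (X b) ∈ commGeOne F := by
  obtain ⟨s, r, hs, hr, h⟩ := exists_X_eq_mulA (F := F) hb
  have := brM_mem_commGeOne (F := F) (ιT_mem_Mge (b := s) 0 (by omega))
    (ιT_mem_Mge (b := r) 1 (by omega))
  simpa [brM_ιT_ιT, wOf, h] using this

theorem ιW_wOf_mem_commGeOne {b : Idx} (i : Fin 2) (hb : 2 ≤ degA b) :
    ιW (wOf i b) ∈ commGeOne F := by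
  obtain ⟨s, r, hs, hr, h⟩ := exists_X_eq_mulA (F := F) hb
  have := brM_mem_commGeOne (F := F) (ιA_mem_Mge (b := s) (by omega))
    (ιT_mem_Mge (b := r) i (by omega))
  rw [brM_ιA_ιT] at this
  fin_cases i <;> simpa [smulA, wOf, h] using this

theorem ιT_smul (c : F) (D : W F) : ιT (c • D) = c • (ιT D : Mel F) := by
  simp [ιT]

theorem mem_of_natCast_smul_mem [CharP F 5] {N : Submodule F (Mel F)} {n : ℕ} {m : Mel F}
    (hn : ¬ 5 ∣ n) (h : (n : F) • m ∈ N) : m ∈ N :=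
  (Submodule.smul_mem_iff N (mt (CharP.cast_eq_zero_iff F 5 n).1 hn)).1 h

/-- `[x₂^k D₂, x^c D̃₁] = (c₂ + 2k) x₁^{c₁} x₂^{c₂+k-1} D̃₁`. -/
theorem brM_D2_T1 {a c e : Idx} (ha : a.1.val = 0) (h₁ : c.1.val = e.1.val)
    (h₂ : a.2.val + c.2.val = e.2.val + 1) :
    brM (ιW (wOf 1 a)) (ιT (wOf 0 c)) =
      ((c.2.val + 2 * a.2.val : ℕ) : F) • (ιT (wOf 0 e) : Mel F) := by
  have h := mulA_X_d2_X (F := F) (b := a) (c := c) (a := e) (by omega) h₂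
  have h' := mulA_X_d2_X (F := F) (b := c) (c := a) (a := e) (by omega) (by omega)
  rw [brM_ιW_ιT, ← ιT_smul]
  congr 1
  simp [wOf, brW, Dw, smulA, divW, h, d1_X_of_eq_zero ha, mulA_comm _ (X c), h', add_smul,
    mul_smul]

/-- `[x₁^k D₁, x^c D̃₂] = (c₁ + 2k) x₁^{c₁+k-1} x₂^{c₂} D̃₂`. -/
theorem brM_D1_T2 {a c e : Idx} (ha : a.2.val = 0) (h₁ : a.1.val + c.1.val = e.1.val + 1)
    (h₂ : c.2.val = e.2.val) :
    brM (ιW (wOf 0 a)) (ιT (wOf 1 c)) =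
      ((c.1.val + 2 * a.1.val : ℕ) : F) • (ιT (wOf 1 e) : Mel F) := by
  have h := mulA_X_d1_X (F := F) (b := a) (c := c) (a := e) h₁ (by omega)
  have h' := mulA_X_d1_X (F := F) (b := c) (c := a) (a := e) (by omega) (by omega)
  rw [brM_ιW_ιT, ← ιT_smul]
  congr 1
  simp [wOf, brW, Dw, smulA, divW, h, d2_X_of_eq_zero ha, mulA_comm _ (X c), h', add_smul,
    mul_smul]

/-- `[x^a D₁, x^c D̃₁] = (a₁ + c₁) x₁^{a₁+c₁-1} x₂^{a₂+c₂} D̃₁`. -/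
theorem brM_D1_T1 {a c e : Idx} (h₁ : a.1.val + c.1.val = e.1.val + 1)
    (h₂ : a.2.val + c.2.val = e.2.val) :
    brM (ιW (wOf 0 a)) (ιT (wOf 0 c)) =
      ((a.1.val + c.1.val : ℕ) : F) • (ιT (wOf 0 e) : Mel F) := by
  have h := mulA_X_d1_X (F := F) (b := a) (c := c) (a := e) h₁ h₂
  have h' := mulA_X_d1_X (F := F) (b := c) (c := a) (a := e) (by omega) (by omega)
  rw [brM_ιW_ιT, ← ιT_smul]
  congr 1
  simp [wOf, brW, Dw, smulA, divW, h, mulA_comm _ (X c), h']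
  module

/-- `[x^a D₂, x^c D̃₂] = (a₂ + c₂) x₁^{a₁+c₁} x₂^{a₂+c₂-1} D̃₂`. -/
theorem brM_D2_T2 {a c e : Idx} (h₁ : a.1.val + c.1.val = e.1.val)
    (h₂ : a.2.val + c.2.val = e.2.val + 1) :
    brM (ιW (wOf 1 a)) (ιT (wOf 1 c)) =
      ((a.2.val + c.2.val : ℕ) : F) • (ιT (wOf 1 e) : Mel F) := by
  have h := mulA_X_d2_X (F := F) (b := a) (c := c) (a := e) h₁ h₂
  have h' := mulA_X_d2_X (F := F) (b := c) (c := a) (a := e) (by omega) (by omega)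
  rw [brM_ιW_ιT, ← ιT_smul]
  congr 1
  simp [wOf, brW, Dw, smulA, divW, h, mulA_comm _ (X c), h']
  module

theorem ιT_wOf_zero_mem_of_pos [CharP F 5] {b : Idx} (hb : 2 ≤ degA b) (h : 0 < b.2.val) :
    ιT (wOf 0 b) ∈ commGeOne F := by
  unfold degA at hb
  by_cases hsq : b.1.val = 0 ∧ b.2.val = 2
  · obtain rfl : b = (0, 2) := Prod.ext (Fin.ext hsq.1) (Fin.ext hsq.2)
    have := brM_mem_commGeOne (F := F) (ιA_mem_Mge (b := (0, 2)) (by simp [degA]))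
      (ιA_mem_Mge (b := (0, 1)) (by simp [degA]))
    rw [brM_ιA_ιA, mulA_X_d2_X (a := (0, 2)) rfl rfl, mulA_X_d2_X (a := (0, 2)) rfl rfl,
      d1_X_of_eq_zero rfl, d1_X_of_eq_zero rfl] at this
    refine mem_of_natCast_smul_mem (n := 2) (by decide) ?_
    rw [← ιT_smul]
    convert this using 2
    ext a <;> simp [wOf]
    exact Or.inl (by ring)
  · obtain ⟨k, hk, hk5, hkb, hdvd, hdeg⟩ : ∃ k, 2 ≤ k ∧ k < 5 ∧ k ≤ b.2.val + 1 ∧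
        ¬ 5 ∣ (b.2.val + 1 - k) + 2 * k ∧ 1 ≤ b.1.val + (b.2.val + 1 - k) := by
      by_cases h2 : b.2.val = 2
      · exact ⟨3, by omega⟩
      · exact ⟨2, by omega⟩
    refine mem_of_natCast_smul_mem hdvd ?_
    rw [← brM_D2_T1 (e := b) (a := (0, ⟨k, hk5⟩)) (c := (b.1, ⟨b.2.val + 1 - k, by omega⟩)) rfl rfl
      (by simp; omega)]
    exact brM_mem_commGeOne (ιW_mem_Mge 1 (by simp [degA]; omega))
      (ιT_mem_Mge 0 (by simp [degA]; omega))

theorem ιT_wOf_one_mem_of_pos [CharP F 5] {b : Idx} (hb : 2 ≤ degA b) (h : 0 < b.1.val) :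
    ιT (wOf 1 b) ∈ commGeOne F := by
  unfold degA at hb
  by_cases hsq : b.1.val = 2 ∧ b.2.val = 0
  · obtain rfl : b = (2, 0) := Prod.ext (Fin.ext hsq.1) (Fin.ext hsq.2)
    have := brM_mem_commGeOne (F := F) (ιA_mem_Mge (b := (1, 0)) (by simp [degA]))
      (ιA_mem_Mge (b := (2, 0)) (by simp [degA]))
    rw [brM_ιA_ιA, mulA_X_d1_X (a := (2, 0)) rfl rfl, mulA_X_d1_X (a := (2, 0)) rfl rfl,
      d2_X_of_eq_zero rfl, d2_X_of_eq_zero rfl] at this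
    refine mem_of_natCast_smul_mem (n := 2) (by decide) ?_
    rw [← ιT_smul]
    convert this using 2
    ext a <;> simp [wOf]
    exact Or.inl (by ring)
  · obtain ⟨k, hk, hk5, hkb, hdvd, hdeg⟩ : ∃ k, 2 ≤ k ∧ k < 5 ∧ k ≤ b.1.val + 1 ∧
        ¬ 5 ∣ (b.1.val + 1 - k) + 2 * k ∧ 1 ≤ (b.1.val + 1 - k) + b.2.val := by
      by_cases h2 : b.1.val = 2
      · exact ⟨3, by omega⟩
      · exact ⟨2, by omega⟩
    refine mem_of_natCast_smul_mem hdvd ?_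
    rw [← brM_D1_T2 (e := b) (a := (⟨k, hk5⟩, 0)) (c := (⟨b.1.val + 1 - k, by omega⟩, b.2)) rfl
      (by simp; omega) rfl]
    exact brM_mem_commGeOne (ιW_mem_Mge 0 (by simp [degA]; omega))
      (ιT_mem_Mge 1 (by simp [degA]; omega))

theorem ιT_wOf_zero_mem_commGeOne [CharP F 5] {b : Idx} (hb : 2 ≤ degA b) :
    ιT (wOf 0 b) ∈ commGeOne F := by
  rcases Nat.eq_zero_or_pos b.2.val with h | h
  swap
  · exact ιT_wOf_zero_mem_of_pos hb h
  by_cases h4 : b.1.val = 4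
  · obtain rfl : b = (4, 0) := Prod.ext (Fin.ext h4) (Fin.ext h)
    have hbr := brM_mem_commGeOne (F := F) (ιA_mem_Mge (b := (4, 0)) (by simp [degA]))
      (ιA_mem_Mge (b := (0, 1)) (by simp [degA]))
    rw [brM_ιA_ιA, mulA_X_d2_X (a := (4, 0)) rfl rfl, mulA_X_d2_X (a := (4, 0)) rfl rfl,
      mulA_X_d1_X (a := (3, 1)) rfl rfl, mulA_X_d1_X (a := (3, 1)) rfl rfl] at hbr
    have h31 := ιT_wOf_one_mem_of_pos (F := F) (b := (3, 1)) (by simp [degA]) (by simp)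
    refine mem_of_natCast_smul_mem (n := 2) (by decide) ?_
    convert add_mem (neg_mem hbr) (Submodule.smul_mem _ (-8 : F) h31) using 1
    ext a <;> simp [wOf, ιT]
    ring
  · unfold degA at hb
    refine mem_of_natCast_smul_mem (n := (2 : Fin 5).val + (b.1.val - 1)) (by simp; omega) ?_
    rw [← brM_D1_T1 (e := b) (a := (2, 0)) (c := (⟨b.1.val - 1, by omega⟩, b.2))
      (by simp; omega) (by simp)]
    exact brM_mem_commGeOne (ιW_mem_Mge 0 (by simp [degA]))
      (ιT_mem_Mge 0 (by simp [degA]; omega))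

theorem ιT_wOf_one_mem_commGeOne [CharP F 5] {b : Idx} (hb : 2 ≤ degA b) :
    ιT (wOf 1 b) ∈ commGeOne F := by
  rcases Nat.eq_zero_or_pos b.1.val with h | h
  swap
  · exact ιT_wOf_one_mem_of_pos hb h
  by_cases h4 : b.2.val = 4
  · obtain rfl : b = (0, 4) := Prod.ext (Fin.ext h) (Fin.ext h4)
    have hbr := brM_mem_commGeOne (F := F) (ιA_mem_Mge (b := (0, 4)) (by simp [degA]))
      (ιA_mem_Mge (b := (1, 0)) (by simp [degA]))
    rw [brM_ιA_ιA, mulA_X_d1_X (a := (0, 4)) rfl rfl, mulA_X_d1_X (a := (0, 4)) rfl rfl,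
      mulA_X_d2_X (a := (1, 3)) rfl rfl, mulA_X_d2_X (a := (1, 3)) rfl rfl] at hbr
    have h13 := ιT_wOf_zero_mem_of_pos (F := F) (b := (1, 3)) (by simp [degA]) (by simp)
    refine mem_of_natCast_smul_mem (n := 2) (by decide) ?_
    convert add_mem hbr (Submodule.smul_mem _ (-8 : F) h13) using 1
    ext a <;> simp [wOf, ιT]
    ring
  · unfold degA at hb
    refine mem_of_natCast_smul_mem (n := (2 : Fin 5).val + (b.2.val - 1)) (by simp; omega) ?_
    rw [← brM_D2_T2 (e := b) (a := (0, 2)) (c := (b.1, ⟨b.2.val - 1, by omega⟩))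
      (by simp) (by simp; omega)]
    exact brM_mem_commGeOne (ιW_mem_Mge 1 (by simp [degA]))
      (ιT_mem_Mge 1 (by simp [degA]; omega))

theorem Mge_three_le_commGeOne [CharP F 5] : Mge 3 ≤ commGeOne F := by
  refine Mge_le (fun b hb => ιA_X_mem_commGeOne (by omega))
    (fun b i hb => ιW_wOf_mem_commGeOne i (by omega)) (fun b i hb => ?_)
  fin_cases i
  · exact ιT_wOf_zero_mem_commGeOne (by omega)
  · exact ιT_wOf_one_mem_commGeOne (by omega)

theorem ιT_euler_mem_commGeOne [CharP F 5] : ιT (X (1, 0), X (0, 1)) ∈ commGeOne F := by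
  have h := brM_mem_commGeOne (F := F) (ιA_mem_Mge (b := (0, 1)) (by simp [degA]))
    (ιA_mem_Mge (b := (1, 0)) (by simp [degA]))
  rw [brM_ιA_ιA, mulA_X_d2_X (a := (1, 0)) rfl rfl, mulA_X_d2_X (a := (1, 0)) rfl rfl,
    mulA_X_d1_X (a := (0, 1)) rfl rfl, mulA_X_d1_X (a := (0, 1)) rfl rfl] at h
  refine mem_of_natCast_smul_mem (n := 2) (by decide) ?_
  rw [← ιT_smul]
  convert h using 2
  ext a <;> simp

/-! ### The commutator is contained in `M_{≥ 3} + F·(x₁D̃₁ + x₂D̃₂)` -/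

theorem mulA_apply_zero (f g : A F) : mulA f g (0, 0) = f (0, 0) * g (0, 0) := by
  simp [mulA, Fintype.sum_prod_type, Fin.sum_univ_five]

theorem mulA_apply_x₁ (f g : A F) :
    mulA f g (1, 0) = f (0, 0) * g (1, 0) + f (1, 0) * g (0, 0) := by
  simp [mulA, Fintype.sum_prod_type, Fin.sum_univ_five]

theorem mulA_apply_x₂ (f g : A F) :
    mulA f g (0, 1) = f (0, 0) * g (0, 1) + f (0, 1) * g (0, 0) := by
  simp [mulA, Fintype.sum_prod_type, Fin.sum_univ_five]

theorem d1_apply_zero (f : A F) : d1 f (0, 0) = f (1, 0) := by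
  simp [d1]

theorem d2_apply_zero (f : A F) : d2 f (0, 0) = f (0, 1) := by
  simp [d2]

theorem eq_of_degA_le_one {b : Idx} (h : degA b ≤ 1) : b = (0, 0) ∨ b = (1, 0) ∨ b = (0, 1) := by
  revert b
  unfold degA
  decide

theorem coords_of_mem_Mge_one {u : Mel F} (hu : u ∈ (Mge 1 : Submodule F (Mel F))) :
    u.1 (0, 0) = 0 ∧
    (u.2.1.1 (0, 0) = 0 ∧ u.2.1.1 (1, 0) = 0 ∧ u.2.1.1 (0, 1) = 0) ∧
    (u.2.1.2 (0, 0) = 0 ∧ u.2.1.2 (1, 0) = 0 ∧ u.2.1.2 (0, 1) = 0) ∧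
    u.2.2.1 (0, 0) = 0 ∧ u.2.2.2 (0, 0) = 0 := by
  have h := Mge_le_coordGe 1 hu
  have h00 := h (0, 0)
  have h10 := h (1, 0)
  have h01 := h (0, 1)
  simp [degA] at h00 h10 h01
  tauto

theorem brM_mem_sup {x y : Mel F} (hx : x ∈ (Mge 1 : Submodule F (Mel F)))
    (hy : y ∈ (Mge 1 : Submodule F (Mel F))) :
    brM x y ∈ (Mge 3 : Submodule F (Mel F)) ⊔ Submodule.span F {ιT (X (1, 0), X (0, 1))} := by
  obtain ⟨hx, ⟨hx1, hx2, hx3⟩, ⟨hx4, hx5, hx6⟩, hx7, hx8⟩ := coords_of_mem_Mge_one hx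
  obtain ⟨hy, ⟨hy1, hy2, hy3⟩, ⟨hy4, hy5, hy6⟩, hy7, hy8⟩ := coords_of_mem_Mge_one hy
  set c : F := 2 * (y.1 (1, 0) * x.1 (0, 1) - x.1 (1, 0) * y.1 (0, 1)) with hc
  rw [← sub_add_cancel (brM x y) (c • ιT (X (1, 0), X (0, 1)))]
  refine add_mem (Submodule.mem_sup_left (coordGe_le_Mge 3 fun b => ?_))
    (Submodule.mem_sup_right (Submodule.smul_mem _ _ (Submodule.mem_span_singleton_self _)))
  refine ⟨fun hb => ?_, fun hb => ?_, fun hb => ?_⟩ <;>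
    rcases eq_of_degA_le_one (b := b) (by omega) with rfl | rfl | rfl <;>
    simp [brM, brW, Dw, divW, smulA, ιT, X, mulA_apply_zero, mulA_apply_x₁, mulA_apply_x₂,
      d1_apply_zero, d2_apply_zero, *]
  · exact Or.inr (by ring)
  · exact ⟨Or.inr (by ring), by ring⟩

/-- In the Melikian algebra over a field of characteristic 5,
`[M_{≥1}, M_{≥1}] = M_{≥3} + F·(x₁D̃₁ + x₂D̃₂)`. -/
theorem melikian_commutator_ge_one (F : Type*) [Field F] [CharP F 5] :
    Submodule.span F {m : Mel F | ∃ x ∈ (Mge 1 : Submodule F (Mel F)),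
        ∃ y ∈ (Mge 1 : Submodule F (Mel F)), m = brM x y} =
      (Mge 3 : Submodule F (Mel F)) ⊔ Submodule.span F {ιT (X (1, 0), X (0, 1))} := by
  refine le_antisymm (Submodule.span_le.2 ?_) (sup_le Mge_three_le_commGeOne ?_)
  · rintro m ⟨x, hx, y, hy, rfl⟩
    exact brM_mem_sup hx hy
  · exact (Submodule.span_singleton_le_iff_mem _ _).2 ιT_euler_mem_commGeOne

end Melikian
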